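/- arXiv:2310.11455 — 2 statements merged into one kernel-verified Lean document; each statement's English description precedes it below -/
import Mathlib

section
/- Let D ⊂ ℂ be a bounded simply connected open set, let f : ℂ → ℂ be a homeomorphism of ℂ which is holomorphic on D, and let arg₀ : D → ℝ be a continuous function such that (deriv f)(z)·exp(−i·arg₀(z)) is a positive real number for every z ∈ D. Let η : [0,1] → ℂ be a curve regular near its endpoints with η(0) ∈ D and η(1) ∈ D. Then for every regular simple curve r representing η and every regular simple curve s representing f ∘ η, one has TC(s) − TC(r) = arg₀(η(1)) − arg₀(η(0)), where TC denotes total curvature. -/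
/-- The derivative of a curve `η : [0,1] → ℂ`, taken within `[0,1]`. -/
noncomputable def curveDeriv (η : ℝ → ℂ) : ℝ → ℂ :=
  fun t => derivWithin η (Set.Icc 0 1) t

/-- A regular curve: continuously differentiable on `[0,1]` with nonvanishing derivative. -/
def IsRegularCurve (η : ℝ → ℂ) : Prop :=
  ContDiffOn ℝ 1 η (Set.Icc 0 1) ∧ ∀ t ∈ Set.Icc (0 : ℝ) 1, curveDeriv η t ≠ 0

/-- A regular simple curve: an injective regular curve. -/
def IsRegularSimpleCurve (η : ℝ → ℂ) : Prop :=
  IsRegularCurve η ∧ Set.InjOn η (Set.Icc 0 1)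

/-- `θ` is an argument lift of the nowhere-vanishing function `g` on `[0,1]`:
`θ` is continuous and `g(t)·exp(−i·θ(t))` is a positive real number for all `t`. -/
def IsArgLift (g : ℝ → ℂ) (θ : ℝ → ℝ) : Prop :=
  ContinuousOn θ (Set.Icc 0 1) ∧
    ∀ t ∈ Set.Icc (0 : ℝ) 1, ∃ r : ℝ, 0 < r ∧
      g t * Complex.exp (-(θ t : ℂ) * Complex.I) = (r : ℂ)

open Classical in
/-- The total curvature of a curve: `θ(1) − θ(0)` for an argument lift `θ` of its
derivative (and `0` if no argument lift exists). -/
noncomputable def totalCurvature (η : ℝ → ℂ) : ℝ :=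
  if h : ∃ θ : ℝ → ℝ, IsArgLift (curveDeriv η) θ then h.choose 1 - h.choose 0 else 0

/-- A curve regular near its endpoints: an injective continuous curve which is
continuously differentiable with nonvanishing derivative on `[0,ε]` and `[1−ε,1]`
for some `ε ∈ (0, 1/2)`. -/
def RegularNearEndpoints (η : ℝ → ℂ) : Prop :=
  ContinuousOn η (Set.Icc 0 1) ∧ Set.InjOn η (Set.Icc 0 1) ∧
    ∃ ε ∈ Set.Ioo (0 : ℝ) (1 / 2),
      ContDiffOn ℝ 1 η (Set.Icc 0 ε) ∧ ContDiffOn ℝ 1 η (Set.Icc (1 - ε) 1) ∧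
        ∀ t ∈ Set.Icc (0 : ℝ) ε ∪ Set.Icc (1 - ε) 1, curveDeriv η t ≠ 0

/-- `r` represents `η`: `r` agrees with `η` near the endpoints and the middle parts
are homotopic (rel endpoints) in the twice-slitted plane
`ℂ \ (η([0,ε]) ∪ η([1−ε,1]))`. -/
def Represents (r η : ℝ → ℂ) : Prop :=
  ∃ ε ∈ Set.Ioo (0 : ℝ) (1 / 2),
    (∀ t ∈ Set.Icc (0 : ℝ) ε ∪ Set.Icc (1 - ε) 1, r t = η t) ∧
    ∃ H : ℝ × ℝ → ℂ,
      ContinuousOn H (Set.Icc 0 1 ×ˢ Set.Icc ε (1 - ε)) ∧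
      (∀ t ∈ Set.Icc ε (1 - ε), H (0, t) = η t ∧ H (1, t) = r t) ∧
      (∀ s ∈ Set.Icc (0 : ℝ) 1, H (s, ε) = η ε ∧ H (s, 1 - ε) = η (1 - ε)) ∧
      ∀ s ∈ Set.Icc (0 : ℝ) 1, ∀ t ∈ Set.Ioo ε (1 - ε),
        H (s, t) ∉ η '' Set.Icc 0 ε ∪ η '' Set.Icc (1 - ε) 1

section Helpers
open Set Filter Topology

/-- `h` has a continuous logarithm on `[0,1]` with total variation `c`. -/
def HasLogVar (h : ℝ → ℂ) (c : ℂ) : Prop :=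
  ∃ L : ℝ → ℂ, ContinuousOn L (Icc 0 1) ∧ (∀ t ∈ Icc (0 : ℝ) 1, Complex.exp (L t) = h t) ∧
    L 1 - L 0 = c

theorem HasLogVar.congr {h k : ℝ → ℂ} {c : ℂ} (H : HasLogVar h c)
    (e : ∀ t ∈ Icc (0 : ℝ) 1, k t = h t) : HasLogVar k c := by
  obtain ⟨L, h1, h2, h3⟩ := H
  exact ⟨L, h1, fun t ht => by rw [h2 t ht, e t ht], h3⟩

theorem HasLogVar.mul {h k : ℝ → ℂ} {c d : ℂ} (H : HasLogVar h c) (K : HasLogVar k d) :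
    HasLogVar (fun t => h t * k t) (c + d) := by
  obtain ⟨L, h1, h2, h3⟩ := H
  obtain ⟨M, k1, k2, k3⟩ := K
  refine ⟨fun t => L t + M t, h1.add k1, fun t ht => ?_, ?_⟩
  · rw [Complex.exp_add, h2 t ht, k2 t ht]
  · rw [← h3, ← k3]; ring

theorem HasLogVar.of_one {h : ℝ → ℂ} {c : ℂ} (H : HasLogVar h c)
    (e : ∀ t ∈ Icc (0 : ℝ) 1, h t = 1) : c = 0 := by
  obtain ⟨L, h1, h2, h3⟩ := H
  have hpi : (2 * Real.pi * Complex.I : ℂ) ≠ 0 := by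
    simp [Real.pi_ne_zero]
  have hn : ∀ t ∈ Icc (0 : ℝ) 1, ∃ n : ℤ, L t = n * (2 * Real.pi * Complex.I) := fun t ht => by
    have := h2 t ht
    rw [e t ht] at this
    exact Complex.exp_eq_one_iff.1 this
  have hc : ContinuousOn (fun t => (L t / (2 * Real.pi * Complex.I)).re) (Icc 0 1) :=
    Complex.continuous_re.comp_continuousOn (h1.div_const _)
  have key : ∀ t ∈ Icc (0 : ℝ) 1, (L t / (2 * Real.pi * Complex.I)).re
      = (L 0 / (2 * Real.pi * Complex.I)).re := by
    intro t ht
    have hpre : IsPreconnected (Icc (0 : ℝ) 1) := isPreconnected_Icc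
    have hsub : (fun t => (L t / (2 * Real.pi * Complex.I)).re) '' Icc 0 1 ⊆
        range ((↑) : ℤ → ℝ) := by
      rintro _ ⟨u, hu, rfl⟩
      obtain ⟨n, hn⟩ := hn u hu
      refine ⟨n, ?_⟩
      simp only
      rw [hn, mul_div_cancel_right₀ _ hpi]; simp
    have himg := hpre.image _ hc
    have hd : (range ((↑) : ℤ → ℝ)).Countable := countable_range _
    have hss : ((fun t => (L t / (2 * Real.pi * Complex.I)).re) '' Icc 0 1).Subsingleton := by
      exact hd.isTotallyDisconnected _ hsub himg
    exact hss ⟨t, ht, rfl⟩ ⟨0, by simp, rfl⟩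
  obtain ⟨n, hn0⟩ := hn 0 (by simp)
  obtain ⟨m, hn1⟩ := hn 1 (by simp)
  have := key 1 (by simp)
  rw [hn0, hn1, mul_div_cancel_right₀ _ hpi, mul_div_cancel_right₀ _ hpi] at this
  simp only [Complex.intCast_re] at this
  have : m = n := by exact_mod_cast this
  rw [← h3, hn0, hn1, this]; simp

theorem HasLogVar.unique {h : ℝ → ℂ} {c d : ℂ} (H : HasLogVar h c) (K : HasLogVar h d) :
    c = d := by
  obtain ⟨L, h1, h2, h3⟩ := H
  obtain ⟨M, k1, k2, k3⟩ := K
  have : HasLogVar (fun _ => 1) (c - d) := by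
    refine ⟨fun t => L t - M t, h1.sub k1, fun t ht => ?_, ?_⟩
    · rw [Complex.exp_sub, h2 t ht, k2 t ht, div_self]
      rw [← h2 t ht]; exact Complex.exp_ne_zero _
    · rw [← h3, ← k3]; ring
  exact sub_eq_zero.1 (this.of_one fun _ _ => rfl)

theorem HasLogVar.argLift {h : ℝ → ℂ} {c : ℂ} (H : HasLogVar h c) {θ : ℝ → ℝ}
    (hθ : IsArgLift h θ) : θ 1 - θ 0 = c.im := by
  obtain ⟨L, h1, h2, h3⟩ := id H
  obtain ⟨t1, t2⟩ := hθ
  have K : HasLogVar h (((L 1).re + θ 1 * Complex.I) - ((L 0).re + θ 0 * Complex.I)) := by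
    refine ⟨fun t => (L t).re + θ t * Complex.I, ?_, fun t ht => ?_, rfl⟩
    · exact (Complex.continuous_ofReal.comp_continuousOn
        (Complex.continuous_re.comp_continuousOn h1)).add
        ((Complex.continuous_ofReal.comp_continuousOn t1).mul continuousOn_const)
    · obtain ⟨ρ, hρ, e⟩ := t2 t ht
      have hn : ‖h t‖ = ρ := by
        have := congrArg norm e
        rw [norm_mul, Complex.norm_exp] at this
        simpa [abs_of_pos hρ] using this
      rw [← h2 t ht, Complex.norm_exp] at hn
      rw [Complex.exp_add, ← Complex.ofReal_exp, hn, ← e, mul_assoc, ← Complex.exp_add]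
      simp
  have := congrArg Complex.im (K.unique H)
  simpa using this

theorem HasLogVar.totalCurvature {r : ℝ → ℂ} {c : ℂ} (H : HasLogVar (curveDeriv r) c) :
    totalCurvature r = c.im := by
  obtain ⟨L, h1, h2, h3⟩ := id H
  have hex : ∃ θ : ℝ → ℝ, IsArgLift (curveDeriv r) θ := by
    refine ⟨fun t => (L t).im, Complex.continuous_im.comp_continuousOn h1, fun t ht =>
      ⟨Real.exp (L t).re, Real.exp_pos _, ?_⟩⟩
    rw [← h2 t ht, ← Complex.exp_add, Complex.ofReal_exp]
    congr 1
    apply Complex.ext <;> simp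
  unfold _root_.totalCurvature
  rw [dif_pos hex]
  exact H.argLift hex.choose_spec

theorem exists_log {X : Type*} [TopologicalSpace X] [SimplyConnectedSpace X]
    [LocallyPathConnectedSpace X] (F : X → ℂ) (hF : Continuous F) (h0 : ∀ x, F x ≠ 0) :
    ∃ L : X → ℂ, Continuous L ∧ ∀ x, Complex.exp (L x) = F x := by
  obtain ⟨a⟩ : Nonempty X := inferInstance
  obtain ⟨L, ⟨-, hL⟩, -⟩ := Complex.isCoveringMapOn_exp.existsUnique_continuousMap_lifts
    (⟨F, hF⟩ : C(X, ℂ)) (a₀ := a) (e₀ := Complex.log (F a)) (Complex.exp_log (h0 a))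
    (fun x => h0 x)
  exact ⟨L, L.continuous, fun x => congrFun hL x⟩

/-- Clamping to `[a,b]`. -/
noncomputable def clampTo (a b t : ℝ) : ℝ := max a (min b t)

theorem clampTo_cont (a b : ℝ) : Continuous (clampTo a b) := by unfold clampTo; fun_prop
theorem clampTo_mem {a b : ℝ} (h : a ≤ b) (t : ℝ) : clampTo a b t ∈ Icc a b := by
  unfold clampTo; constructor <;> grind
theorem clampTo_eq {a b t : ℝ} (h : t ∈ Icc a b) : clampTo a b t = t := by
  unfold clampTo; obtain ⟨h1, h2⟩ := h; grind
theorem clampTo_le {a b t : ℝ} (h : a ≤ b) (ht : t ≤ a) : clampTo a b t = a := by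
  unfold clampTo; grind
theorem clampTo_ge {a b t : ℝ} (h : a ≤ b) (ht : b ≤ t) : clampTo a b t = b := by
  unfold clampTo; grind

theorem square_log (F : ℝ × ℝ → ℂ) (hF : ContinuousOn F (Icc 0 1 ×ˢ Icc 0 1))
    (h0 : ∀ x ∈ Icc (0 : ℝ) 1 ×ˢ Icc (0 : ℝ) 1, F x ≠ 0) :
    ∃ L : ℝ × ℝ → ℂ, Continuous L ∧
      ∀ x ∈ Icc (0 : ℝ) 1 ×ˢ Icc (0 : ℝ) 1, Complex.exp (L x) = F x := by
  have hm : ∀ x : ℝ × ℝ, (clampTo 0 1 x.1, clampTo 0 1 x.2) ∈ Icc (0 : ℝ) 1 ×ˢ Icc (0 : ℝ) 1 :=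
    fun x => ⟨clampTo_mem zero_le_one _, clampTo_mem zero_le_one _⟩
  have hc : Continuous fun x : ℝ × ℝ => (clampTo 0 1 x.1, clampTo 0 1 x.2) :=
    ((clampTo_cont 0 1).comp continuous_fst).prodMk ((clampTo_cont 0 1).comp continuous_snd)
  obtain ⟨L, hL, e⟩ := exists_log (fun x : ℝ × ℝ => F (clampTo 0 1 x.1, clampTo 0 1 x.2))
    (hF.comp_continuous hc hm) (fun x => h0 _ (hm x))
  refine ⟨L, hL, fun x hx => ?_⟩
  rw [e, clampTo_eq hx.1, clampTo_eq hx.2]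

theorem square_symm (F : ℝ × ℝ → ℂ) (hF : ContinuousOn F (Icc 0 1 ×ˢ Icc 0 1))
    (h0 : ∀ x ∈ Icc (0 : ℝ) 1 ×ˢ Icc (0 : ℝ) 1, F x ≠ 0) (hs : ∀ s t, F (s, t) = F (t, s)) :
    ∃ c d, HasLogVar (fun t => F (0, t)) c ∧ HasLogVar (fun t => F (1, t)) d ∧
      HasLogVar (fun t => F (t, t)) (c + d) := by
  obtain ⟨L, hL, e⟩ := square_log F hF h0
  have A : HasLogVar (fun t => F (1, t)) (L (1, 1) - L (0, 1)) :=
    ⟨fun t => L (t, 1), by fun_prop, fun t ht => by rw [e _ ⟨ht, by simp⟩, hs], rfl⟩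
  refine ⟨L (0, 1) - L (0, 0), _, ⟨fun t => L (0, t), by fun_prop,
    fun t ht => e _ ⟨by simp, ht⟩, rfl⟩, A, ⟨fun t => L (t, t), by fun_prop,
    fun t ht => e _ ⟨ht, ht⟩, by ring⟩⟩

/-- Difference quotient. -/
noncomputable def dquot {𝕜 : Type*} [NontriviallyNormedField 𝕜] [NormedSpace 𝕜 ℂ]
    (f d : 𝕜 → ℂ) (x : 𝕜 × 𝕜) : ℂ :=
  open Classical in if x.1 = x.2 then d x.1 else (x.2 - x.1)⁻¹ • (f x.2 - f x.1)

section
variable {𝕜 : Type*} [NontriviallyNormedField 𝕜] [NormedSpace 𝕜 ℂ]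

theorem dquot_same (f d : 𝕜 → ℂ) (x : 𝕜) : dquot f d (x, x) = d x := by simp [dquot]

theorem dquot_ne (f d : 𝕜 → ℂ) {x y : 𝕜} (h : x ≠ y) :
    dquot f d (x, y) = (y - x)⁻¹ • (f y - f x) := by simp [dquot, h]

theorem dquot_symm (f d : 𝕜 → ℂ) (x y : 𝕜) : dquot f d (x, y) = dquot f d (y, x) := by
  rcases eq_or_ne x y with rfl | h
  · rfl
  · rw [dquot_ne _ _ h, dquot_ne _ _ h.symm, ← neg_sub y x, ← neg_sub (f y), inv_neg, neg_smul,
      smul_neg, neg_neg]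

theorem dquot_ne_zero {f d : 𝕜 → ℂ} {U : Set 𝕜} (hf : InjOn f U) (hd : ∀ x ∈ U, d x ≠ 0)
    (x : 𝕜 × 𝕜) (hx : x ∈ U ×ˢ U) : dquot f d x ≠ 0 := by
  obtain ⟨x, y⟩ := x
  obtain ⟨hx, hy⟩ := hx
  rcases eq_or_ne x y with rfl | h
  · rw [dquot_same]; exact hd _ hx
  · rw [dquot_ne _ _ h]
    exact smul_ne_zero (inv_ne_zero (sub_ne_zero.2 h.symm))
      (sub_ne_zero.2 fun e => h (hf hx hy e.symm))

theorem dquot_continuousAt_ne {f d : 𝕜 → ℂ} {x y : 𝕜} (h : x ≠ y) (hx : ContinuousAt f x)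
    (hy : ContinuousAt f y) : ContinuousAt (dquot f d) (x, y) := by
  have : ContinuousAt (fun p : 𝕜 × 𝕜 => (p.2 - p.1)⁻¹ • (f p.2 - f p.1)) (x, y) := by
    refine ContinuousAt.smul (ContinuousAt.inv₀ (by fun_prop) (sub_ne_zero.2 h.symm)) ?_
    exact (ContinuousAt.comp' (f := Prod.snd) hy continuousAt_snd).sub
      (ContinuousAt.comp' (f := Prod.fst) hx continuousAt_fst)
  refine this.congr ?_
  have ho : IsOpen {p : 𝕜 × 𝕜 | p.1 ≠ p.2} := isOpen_ne_fun continuous_fst continuous_snd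
  filter_upwards [ho.mem_nhds h] with p hp
  exact (dquot_ne f d hp).symm

theorem dquot_continuousAt_same {f d : 𝕜 → ℂ} {x : 𝕜} (h : HasStrictDerivAt f (d x) x)
    (hd : ContinuousAt d x) : ContinuousAt (dquot f d) (x, x) := by
  rw [ContinuousAt, dquot_same, Metric.tendsto_nhds]
  intro ε hε
  have h1 := (hasStrictFDerivAt_iff_isLittleO.1 h.hasStrictFDerivAt).bound (half_pos hε)
  have h2 : ∀ᶠ p : 𝕜 × 𝕜 in 𝓝 (x, x), dist (d p.1) (d x) < ε :=
    (ContinuousAt.comp' (f := Prod.fst) (x := (x, x)) hd continuousAt_fst).eventually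
      (Metric.ball_mem_nhds _ hε)
  filter_upwards [h1, h2] with p h1 h2
  obtain ⟨a, b⟩ := p
  rcases eq_or_ne a b with rfl | hab
  · rw [dquot_same]; exact h2
  · rw [dquot_symm, dquot_ne _ _ hab.symm, dist_eq_norm]
    have hne : a - b ≠ 0 := sub_ne_zero.2 hab
    have hpos : 0 < ‖a - b‖ := norm_pos_iff.2 hne
    have : (a - b)⁻¹ • (f a - f b) - d x = (a - b)⁻¹ • (f a - f b - (a - b) • d x) := by
      rw [smul_sub _ (f a - f b), smul_smul, inv_mul_cancel₀ hne, one_smul]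
    rw [this, norm_smul, norm_inv, inv_mul_lt_iff₀ hpos]
    simp only [ContinuousLinearMap.toSpanSingleton_apply] at h1
    refine h1.trans_lt ?_
    nlinarith

theorem dquot_continuousOn {f d : 𝕜 → ℂ} {U : Set 𝕜}
    (h : ∀ x ∈ U, HasStrictDerivAt f (d x) x) (hd : ∀ x ∈ U, ContinuousAt d x) :
    ContinuousOn (dquot f d) (U ×ˢ U) := by
  rintro ⟨x, y⟩ ⟨hx, hy⟩
  apply ContinuousAt.continuousWithinAt
  rcases eq_or_ne x y with rfl | hne
  · exact dquot_continuousAt_same (h x hx) (hd x hx)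
  · exact dquot_continuousAt_ne hne (h x hx).hasDerivAt.continuousAt
      (h y hy).hasDerivAt.continuousAt
end

theorem dquot_curve {r : ℝ → ℂ} (hr : IsRegularSimpleCurve r) :
    ∃ c d, HasLogVar (fun t => dquot r (curveDeriv r) (0, t)) c ∧
      HasLogVar (fun t => dquot r (curveDeriv r) (1, t)) d ∧
      HasLogVar (curveDeriv r) (c + d) := by
  obtain ⟨⟨hC, hne⟩, hinj⟩ := hr
  have hu : UniqueDiffOn ℝ (Icc (0 : ℝ) 1) := uniqueDiffOn_Icc zero_lt_one
  have hdc : ContinuousOn (curveDeriv r) (Icc 0 1) := hC.continuousOn_derivWithin hu le_rfl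
  set E : ℝ → ℂ := fun t => curveDeriv r (clampTo 0 1 t) with hE
  have hEc : Continuous E := hdc.comp_continuous (clampTo_cont 0 1) (clampTo_mem zero_le_one)
  set R : ℝ → ℂ := fun u => r 0 + ∫ x in (0 : ℝ)..u, E x with hR
  have hRd : ∀ x, HasStrictDerivAt R (E x) x := fun x =>
    (hEc.integral_hasStrictDerivAt 0 x).const_add (r 0)
  have hEe : ∀ t ∈ Icc (0 : ℝ) 1, E t = curveDeriv r t := fun t ht => by
    simp only [hE]; rw [clampTo_eq ht]
  have hRe : ∀ t ∈ Icc (0 : ℝ) 1, R t = r t := by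
    refine eq_of_derivWithin_eq
      (fun x _ => (hRd x).hasDerivAt.differentiableAt.differentiableWithinAt)
      (hC.differentiableOn one_ne_zero) (fun x hx => ?_) (by simp [hR])
    have hx' : x ∈ Icc (0 : ℝ) 1 := Ico_subset_Icc_self hx
    rw [(hRd x).hasDerivAt.hasDerivWithinAt.derivWithin (hu x hx'), hEe x hx']
    rfl
  have hq : ∀ x ∈ Icc (0 : ℝ) 1 ×ˢ Icc (0 : ℝ) 1, dquot r (curveDeriv r) x = dquot R E x := by
    rintro ⟨x, y⟩ ⟨hx, hy⟩
    simp only at hx hy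
    rcases eq_or_ne x y with rfl | h
    · rw [dquot_same, dquot_same, hEe _ hx]
    · rw [dquot_ne _ _ h, dquot_ne _ _ h, hRe _ hx, hRe _ hy]
  have hcont : ContinuousOn (dquot r (curveDeriv r)) (Icc 0 1 ×ˢ Icc 0 1) :=
    (dquot_continuousOn (fun x _ => hRd x) (fun x _ => hEc.continuousAt)).congr hq
  obtain ⟨c, d, h1, h2, h3⟩ := square_symm _ hcont (dquot_ne_zero hinj hne) (dquot_symm _ _)
  exact ⟨c, d, h1, h2, h3.congr fun t _ => (dquot_same _ _ _).symm⟩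

theorem Represents.near {r η : ℝ → ℂ} (h : Represents r η) {τ : ℝ} (hτ : τ = 0 ∨ τ = 1) :
    r τ = η τ ∧ ∀ᶠ t in 𝓝[Icc 0 1] τ, r t = η t := by
  obtain ⟨ε, ⟨h0, h1⟩, he, -⟩ := h
  rcases hτ with rfl | rfl
  · refine ⟨he _ (Or.inl ⟨le_rfl, h0.le⟩), ?_⟩
    filter_upwards [self_mem_nhdsWithin, mem_nhdsWithin_of_mem_nhds (Iio_mem_nhds h0)] with t ht ht'
    exact he _ (Or.inl ⟨ht.1, le_of_lt ht'⟩)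
  · have h2 : 1 - ε < 1 := by linarith
    refine ⟨he _ (Or.inr ⟨h2.le, le_rfl⟩), ?_⟩
    filter_upwards [self_mem_nhdsWithin, mem_nhdsWithin_of_mem_nhds (Ioi_mem_nhds h2)] with t ht ht'
    exact he _ (Or.inr ⟨le_of_lt ht', ht.2⟩)

theorem Represents.logVar {r η : ℝ → ℂ} (hc : ContinuousOn η (Icc 0 1))
    (hi : InjOn η (Icc 0 1)) (h : Represents r η) {τ : ℝ} (hτ : τ = 0 ∨ τ = 1) :
    ∃ k : ℝ → ℂ, HasLogVar k 0 ∧ k 0 = 1 ∧ k 1 = 1 ∧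
      ∀ t ∈ Icc (0 : ℝ) 1, r t - η τ = k t * (η t - η τ) := by
  obtain ⟨ε, ⟨h0, h1⟩, he, H, Hc, H1, H2, H3⟩ := h
  have hle : ε ≤ 1 - ε := by linarith
  have hsub : Icc ε (1 - ε) ⊆ Icc (0 : ℝ) 1 := Icc_subset_Icc h0.le (by linarith)
  have hτI : τ ∈ Icc (0 : ℝ) 1 := by rcases hτ with rfl | rfl <;> simp
  have hτm : τ ∈ Icc (0 : ℝ) ε ∪ Icc (1 - ε) 1 := by
    rcases hτ with rfl | rfl
    · exact Or.inl ⟨le_rfl, h0.le⟩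
    · exact Or.inr ⟨by linarith, le_rfl⟩
  have hτn : τ ∉ Icc ε (1 - ε) := by
    rintro ⟨a, b⟩
    rcases hτ with rfl | rfl <;> linarith
  have hη : ∀ t ∈ Icc ε (1 - ε), η t - η τ ≠ 0 := fun t ht e =>
    hτn (hi (hsub ht) hτI (sub_eq_zero.1 e) ▸ ht)
  have hH : ∀ u ∈ Icc (0 : ℝ) 1, ∀ t ∈ Icc ε (1 - ε), H (u, t) - η τ ≠ 0 := by
    intro u hu t ht
    rcases eq_or_lt_of_le ht.1 with rfl | ha
    · rw [(H2 u hu).1]; exact hη _ ht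
    rcases eq_or_lt_of_le ht.2 with rfl | hb
    · rw [(H2 u hu).2]; exact hη _ ht
    · intro e
      refine H3 u hu t ⟨ha, hb⟩ ?_
      rw [sub_eq_zero.1 e, ← image_union]
      exact ⟨τ, hτm, rfl⟩
  set cl := clampTo ε (1 - ε) with hcl
  have hclc : Continuous cl := clampTo_cont _ _
  have hclm : ∀ t, cl t ∈ Icc ε (1 - ε) := clampTo_mem hle
  set K : ℝ × ℝ → ℂ := fun x => (H (x.1, cl x.2) - η τ) / (η (cl x.2) - η τ) with hK
  have Kc : ContinuousOn K (Icc 0 1 ×ˢ Icc 0 1) := by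
    refine ContinuousOn.div (ContinuousOn.sub ?_ continuousOn_const)
      (ContinuousOn.sub ?_ continuousOn_const) fun x _ => hη _ (hclm _)
    · exact Hc.comp (f := fun x : ℝ × ℝ => (x.1, cl x.2)) (by fun_prop) fun x hx => ⟨hx.1, hclm _⟩
    · exact hc.comp (f := fun x : ℝ × ℝ => cl x.2) (by fun_prop) fun x hx => hsub (hclm _)
  obtain ⟨L, hL, e⟩ := square_log K Kc
    (fun x hx => div_ne_zero (hH _ hx.1 _ (hclm _)) (hη _ (hclm _)))
  have K0 : ∀ t, K (0, t) = 1 := fun t => by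
    simp only [hK]; rw [(H1 _ (hclm _)).1, div_self (hη _ (hclm _))]
  have Kl : ∀ u ∈ Icc (0 : ℝ) 1, ∀ t ≤ ε, K (u, t) = 1 := fun u hu t ht => by
    have : cl t = ε := clampTo_le hle ht
    have h' := hη _ (hclm t)
    simp only [hK, this] at h' ⊢; rw [(H2 u hu).1, div_self h']
  have Kr : ∀ u ∈ Icc (0 : ℝ) 1, ∀ t ≥ 1 - ε, K (u, t) = 1 := fun u hu t ht => by
    have : cl t = 1 - ε := clampTo_ge hle ht
    have h' := hη _ (hclm t)
    simp only [hK, this] at h' ⊢; rw [(H2 u hu).2, div_self h']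
  have o : (1 : ℝ) ∈ Icc (0 : ℝ) 1 := by simp
  have z : (0 : ℝ) ∈ Icc (0 : ℝ) 1 := by simp
  have e1 : L (0, 1) - L (0, 0) = 0 := HasLogVar.of_one (h := fun t => K (0, t))
    ⟨fun t => L (0, t), by fun_prop, fun t ht => e _ ⟨z, ht⟩, rfl⟩ fun t _ => K0 t
  have e2 : L (1, 0) - L (0, 0) = 0 := HasLogVar.of_one (h := fun t => K (t, 0))
    ⟨fun t => L (t, 0), by fun_prop, fun t ht => e _ ⟨ht, z⟩, rfl⟩ fun t ht => Kl t ht _ h0.le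
  have e3 : L (1, 1) - L (0, 1) = 0 := HasLogVar.of_one (h := fun t => K (t, 1))
    ⟨fun t => L (t, 1), by fun_prop, fun t ht => e _ ⟨ht, o⟩, rfl⟩
    fun t ht => Kr t ht _ (by linarith)
  refine ⟨fun t => K (1, t), ⟨fun t => L (1, t), by fun_prop, fun t ht => e _ ⟨o, ht⟩, ?_⟩,
    Kl 1 o _ h0.le, Kr 1 o _ (by linarith), fun t ht => ?_⟩
  · linear_combination e1 - e2 + e3
  · rcases le_total t ε with ha | ha
    · simp only; rw [Kl 1 o t ha, he t (Or.inl ⟨ht.1, ha⟩), one_mul]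
    rcases le_total (1 - ε) t with hb | hb
    · simp only; rw [Kr 1 o t hb, he t (Or.inr ⟨hb, ht.2⟩), one_mul]
    · have htm : t ∈ Icc ε (1 - ε) := ⟨ha, hb⟩
      have : cl t = t := clampTo_eq htm
      simp only [hK, this]
      rw [div_mul_cancel₀ _ (hη t htm), (H1 t htm).2]

theorem main_endpoint {f : ℂ → ℂ} (hfc : Continuous f) (hfi : Function.Injective f)
    {η r s : ℝ → ℂ} (hc : ContinuousOn η (Icc 0 1)) (hi : InjOn η (Icc 0 1))
    (hr : IsRegularSimpleCurve r) (hr' : Represents r η) (hs' : Represents s (f ∘ η))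
    {τ : ℝ} (hτ : τ = 0 ∨ τ = 1) (hd : DifferentiableAt ℂ f (η τ)) {ℓ : ℂ → ℂ}
    (hℓ : Continuous ℓ) (hℓe : ∀ z, Complex.exp (ℓ z) = dquot f (deriv f) (η τ, z))
    {c c' : ℂ} (H : HasLogVar (fun t => dquot r (curveDeriv r) (τ, t)) c)
    (H' : HasLogVar (fun t => dquot s (curveDeriv s) (τ, t)) c') :
    c' = c + (ℓ (η 1) - ℓ (η 0)) := by
  have hτI : τ ∈ Icc (0 : ℝ) 1 := by rcases hτ with rfl | rfl <;> simp
  obtain ⟨kr, vr, kr0, kr1, er⟩ := hr'.logVar hc hi hτ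
  obtain ⟨ks, vs, ks0, ks1, es⟩ := hs'.logVar (hfc.comp_continuousOn hc) (hfi.injOn.comp hi
    (mapsTo_univ _ _)) hτ
  have G : HasLogVar (fun t => dquot f (deriv f) (η τ, η t)) (ℓ (η 1) - ℓ (η 0)) :=
    ⟨fun t => ℓ (η t), hℓ.comp_continuousOn hc, fun t _ => hℓe _, rfl⟩
  have krτ : kr τ = 1 := by rcases hτ with rfl | rfl <;> assumption
  have ksτ : ks τ = 1 := by rcases hτ with rfl | rfl <;> assumption
  obtain ⟨r0, rn⟩ := hr'.near hτ
  obtain ⟨s0, sn⟩ := hs'.near hτ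
  have hder : curveDeriv s τ = deriv f (η τ) * curveDeriv r τ := by
    have hrd : HasDerivWithinAt r (curveDeriv r τ) (Icc 0 1) τ :=
      (hr.1.1.differentiableOn one_ne_zero τ hτI).hasDerivWithinAt
    have hfd : HasDerivAt f (deriv f (η τ)) (r τ) := by rw [r0]; exact hd.hasDerivAt
    have h1 : HasDerivWithinAt (f ∘ r) (deriv f (η τ) * curveDeriv r τ) (Icc 0 1) τ :=
      hfd.comp_hasDerivWithinAt τ hrd
    have h2 : HasDerivWithinAt s (deriv f (η τ) * curveDeriv r τ) (Icc 0 1) τ := by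
      refine h1.congr_of_eventuallyEq ?_ (by simp [s0, r0])
      filter_upwards [rn, sn] with t a b
      simp [a, b]
    exact h2.derivWithin (uniqueDiffOn_Icc zero_lt_one τ hτI)
  have P := H'.mul vr
  have Q := H.mul (G.mul vs)
  have := P.unique (Q.congr fun t ht => ?_)
  · simpa using this
  · skip
    rcases eq_or_ne τ t with rfl | hne
    · rw [dquot_same, dquot_same, dquot_same, krτ, ksτ, hder]; ring
    · have hp : η τ ≠ η t := fun e => hne (hi hτI ht e)
      rw [dquot_ne _ _ hne, dquot_ne _ _ hne, dquot_ne _ _ hp, r0, s0, er t ht, es t ht]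
      have : η t - η τ ≠ 0 := sub_ne_zero.2 hp.symm
      simp only [Complex.real_smul, smul_eq_mul, Function.comp]
      field_simp

theorem exists_log_dquot {f : ℂ → ℂ} (hfc : Continuous f) (hfi : Function.Injective f) {p : ℂ}
    (hd : DifferentiableAt ℂ f p) (h0 : deriv f p ≠ 0) :
    ∃ ℓ : ℂ → ℂ, Continuous ℓ ∧ ∀ z, Complex.exp (ℓ z) = dquot f (deriv f) (p, z) := by
  have e : ∀ z, dquot f (deriv f) (p, z) = dslope f p z := fun z => by
    rcases eq_or_ne p z with rfl | h
    · rw [dquot_same, dslope_same]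
    · rw [dquot_ne _ _ h, dslope_of_ne _ h.symm, slope_def_module]
  refine exists_log (fun z => dquot f (deriv f) (p, z)) ?_ fun z => ?_
  · simp only [e]
    refine continuous_iff_continuousAt.2 fun z => ?_
    rcases eq_or_ne z p with rfl | h
    · exact continuousAt_dslope_same.2 hd
    · exact (continuousAt_dslope_of_ne h).2 hfc.continuousAt
  · rcases eq_or_ne p z with rfl | h
    · rw [dquot_same]; exact h0
    · rw [dquot_ne _ _ h]
      exact smul_ne_zero (inv_ne_zero (sub_ne_zero.2 h.symm)) (sub_ne_zero.2 (hfi.ne h.symm))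

end Helpers

/-- **Proposition 2.7 (consistency of `arg f'`).** Let `D ⊂ ℂ` be a bounded simply
connected open set, `f` a homeomorphism of `ℂ` holomorphic on `D`, and `arg₀` a
continuous branch of `arg f'` on `D`. Let `η` be a curve regular near its
endpoints with endpoints in `D`. Then for every regular simple curve `r`
representing `η` and every regular simple curve `s` representing `f ∘ η`,
`TC(s) − TC(r) = arg₀(η(1)) − arg₀(η(0))`. -/
theorem winding_difference_eq_arg_deriv
    (D : Set ℂ) (hDopen : IsOpen D) (hDbdd : Bornology.IsBounded D)
    (hDsc : SimplyConnectedSpace ↥D)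
    (f : ℂ ≃ₜ ℂ) (hf : DifferentiableOn ℂ (⇑f) D)
    (arg₀ : ℂ → ℝ) (harg : ContinuousOn arg₀ D)
    (hargpos : ∀ z ∈ D, ∃ ρ : ℝ, 0 < ρ ∧
      deriv (⇑f) z * Complex.exp (-(arg₀ z : ℂ) * Complex.I) = (ρ : ℂ))
    (η : ℝ → ℂ) (hη : RegularNearEndpoints η)
    (hstartD : η 0 ∈ D) (hendD : η 1 ∈ D)
    (r s : ℝ → ℂ)
    (hr : IsRegularSimpleCurve r) (hs : IsRegularSimpleCurve s)
    (hr' : Represents r η) (hs' : Represents s (⇑f ∘ η)) :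
    totalCurvature s - totalCurvature r = arg₀ (η 1) - arg₀ (η 0) := by
  obtain ⟨hc, hi, -⟩ := hη
  have hne : ∀ z ∈ D, deriv f z ≠ 0 := fun z hz h => by
    obtain ⟨ρ, hρ, e⟩ := hargpos z hz
    rw [h, zero_mul] at e
    exact hρ.ne (by exact_mod_cast e)
  have hda : ∀ z ∈ D, DifferentiableAt ℂ f z := fun z hz =>
    hf.differentiableAt (hDopen.mem_nhds hz)
  obtain ⟨ℓ₀, l0c, l0e⟩ := exists_log_dquot f.continuous f.injective (hda _ hstartD)
    (hne _ hstartD)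
  obtain ⟨ℓ₁, l1c, l1e⟩ := exists_log_dquot f.continuous f.injective (hda _ hendD)
    (hne _ hendD)
  obtain ⟨c, d, r1, r2, r3⟩ := dquot_curve hr
  obtain ⟨c', d', s1, s2, s3⟩ := dquot_curve hs
  have A := main_endpoint f.continuous f.injective hc hi hr hr' hs' (Or.inl rfl)
    (hda _ hstartD) l0c l0e r1 s1
  have B := main_endpoint f.continuous f.injective hc hi hr hr' hs' (Or.inr rfl)
    (hda _ hendD) l1c l1e r2 s2
  rw [s3.totalCurvature, r3.totalCurvature]
  obtain ⟨γ⟩ : Joined (⟨η 0, hstartD⟩ : D) ⟨η 1, hendD⟩ := PathConnectedSpace.joined _ _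
  set g : ℝ → ℂ := fun t => (γ.extend t : ℂ) with hg
  have gc : Continuous g := continuous_subtype_val.comp γ.continuous_extend
  have gD : ∀ t, g t ∈ D := fun t => (γ.extend t).2
  have g0 : g 0 = η 0 := by simp [hg]
  have g1 : g 1 = η 1 := by simp [hg]
  have hdc : ContinuousOn (deriv f) D := (hf.deriv hDopen).continuousOn
  have hq : ContinuousOn (dquot f (deriv f)) (D ×ˢ D) :=
    dquot_continuousOn (fun z hz => (hf.analyticAt (hDopen.mem_nhds hz)).hasStrictDerivAt)
      fun z hz => hdc.continuousAt (hDopen.mem_nhds hz)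
  obtain ⟨a, b, h1, h2, h3⟩ := square_symm (fun x => dquot f (deriv f) (g x.1, g x.2))
    (hq.comp_continuous (f := fun x : ℝ × ℝ => (g x.1, g x.2)) (by fun_prop)
      fun x => ⟨gD _, gD _⟩).continuousOn
    (fun x _ => dquot_ne_zero f.injective.injOn hne _ ⟨gD _, gD _⟩)
    (fun x y => dquot_symm _ _ _ _)
  have ea : a = ℓ₀ (η 1) - ℓ₀ (η 0) := h1.unique
    ⟨fun t => ℓ₀ (g t), by fun_prop, fun t _ => by rw [l0e]; simp only [g0], by simp only [g0, g1]⟩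
  have eb : b = ℓ₁ (η 1) - ℓ₁ (η 0) := h2.unique
    ⟨fun t => ℓ₁ (g t), by fun_prop, fun t _ => by rw [l1e]; simp only [g1], by simp only [g0, g1]⟩
  have E := h3.argLift (θ := fun t => arg₀ (g t))
    ⟨(harg.comp_continuous gc gD).continuousOn, fun t _ => by
      simp only [dquot_same]; exact hargpos _ (gD t)⟩
  simp only [g0, g1] at E
  rw [E, ← Complex.sub_im]
  congr 1
  rw [A, B, ea, eb]; ring
end

section
/- Let m ≥ 1 and let θ₀ : {1, …, 2m−1} → ℝ. Suppose (M⁺, N⁻) and (N⁺, M⁻) are meanders of size m that both have winding function θ₀. Then (M⁺, M⁻) is a meander of size m with winding function θ₀. Consequently, the set of meanders of size m with winding function θ₀ is a product set: it equals S⁺ × S⁻, where S⁺ (resp. S⁻) is the set of upper (resp. lower) matchings occurring in some meander of size m with winding function θ₀. -/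
/-!
Meanders of size `m`.  The point set `P = {1, …, 2m−1} ∪ {∞}` (ordered with `∞`
largest) is modeled as `Fin (n+1)` with `n = 2*m - 1`, the point `k` being index
`k − 1` and `∞` being the last index `Fin.last n`.  A (perfect) matching is an
involution without fixed points, recorded via its partner function.
-/

namespace Meander

/-- A perfect matching of `Fin (n+1)`, given by its partner function: a fixed-point
free involution. -/
def IsMatching {n : ℕ} (M : Fin (n + 1) → Fin (n + 1)) : Prop :=
  Function.Involutive M ∧ ∀ x, M x ≠ x

/-- A matching is noncrossing if there are no two pairs `{a,b}`, `{c,d}` with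
`a < c < b < d`. -/
def Noncrossing {n : ℕ} (M : Fin (n + 1) → Fin (n + 1)) : Prop :=
  ¬ ∃ a c : Fin (n + 1), a < c ∧ c < M a ∧ M a < M c

/-- The graph on the point set whose edge set is `M⁺ ∪ M⁻`. -/
def meanderGraph {n : ℕ} (Mp Mm : Fin (n + 1) → Fin (n + 1)) :
    SimpleGraph (Fin (n + 1)) :=
  SimpleGraph.fromRel fun x y => Mp x = y ∨ Mm x = y

/-- A meander: a pair of noncrossing perfect matchings (upper `Mp`, lower `Mm`)
whose union is a connected graph. -/
def IsMeander {n : ℕ} (Mp Mm : Fin (n + 1) → Fin (n + 1)) : Prop :=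
  IsMatching Mp ∧ Noncrossing Mp ∧ IsMatching Mm ∧ Noncrossing Mm ∧
    (meanderGraph Mp Mm).Connected

/-- The traversal sequence: `v₀ = ∞`, and `v_{i+1}` is the `M⁻`-partner of `vᵢ`
if `i` is even and the `M⁺`-partner of `vᵢ` if `i` is odd. -/
def traversal {n : ℕ} (Mp Mm : Fin (n + 1) → Fin (n + 1)) : ℕ → Fin (n + 1)
  | 0 => Fin.last n
  | (i + 1) =>
      if i % 2 = 0 then Mm (traversal Mp Mm i) else Mp (traversal Mp Mm i)

/-- The winding increment `δᵢ`: `+π` if the step from `vᵢ` to `v_{i+1}` uses `M⁻`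
(i.e. `i` even) and goes rightward, or uses `M⁺` (i.e. `i` odd) and goes leftward;
`−π` otherwise. -/
noncomputable def windingStep {n : ℕ} (Mp Mm : Fin (n + 1) → Fin (n + 1))
    (i : ℕ) : ℝ :=
  if (i % 2 = 0 ∧ traversal Mp Mm i < traversal Mp Mm (i + 1)) ∨
      (i % 2 ≠ 0 ∧ traversal Mp Mm (i + 1) < traversal Mp Mm i)
  then Real.pi else -Real.pi

/-- The winding value along the traversal: `w₁ = 0` and `w_{i+1} = wᵢ + δᵢ`
(so `wᵢ = θ(vᵢ)` for `1 ≤ i`). -/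
noncomputable def windingValue {n : ℕ} (Mp Mm : Fin (n + 1) → Fin (n + 1)) :
    ℕ → ℝ
  | 0 => 0
  | 1 => 0
  | (i + 2) => windingValue Mp Mm (i + 1) + windingStep Mp Mm (i + 1)

/-- `θ : {1, …, n} → ℝ` is the winding function of `(Mp, Mm)`: for `1 ≤ i ≤ n`
the traversal point `vᵢ` is not `∞` and `θ(vᵢ)` equals the winding value `wᵢ`. -/
def IsWindingFunction {n : ℕ} (Mp Mm : Fin (n + 1) → Fin (n + 1))
    (θ : Fin n → ℝ) : Prop :=
  ∀ i : ℕ, 1 ≤ i → i ≤ n →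
    ∃ h : (traversal Mp Mm i : ℕ) < n,
      θ ⟨(traversal Mp Mm i : ℕ), h⟩ = windingValue Mp Mm i

end Meander

namespace Meander

/-- strict betweenness -/
def Bet {N : ℕ} (p q x : Fin N) : Prop := (p < x ∧ x < q) ∨ (q < x ∧ x < p)

lemma bet_lem {N : ℕ} (S : Finset (Fin N)) (L : Fin N → Fin N)
    (hL : ∀ x ∈ S, L x ∈ S ∧ L (L x) = x ∧ L x ≠ x)
    (nc : ∀ a ∈ S, ∀ c ∈ S, a < c → c < L a → L a < L c → False) :
    ∀ p ∈ S, ∀ x ∈ S, x ≠ p → x ≠ L p → Bet p (L p) x → Bet p (L p) (L x) := by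
  have A : ∀ p ∈ S, ∀ x ∈ S, x ≠ p → x ≠ L p → p < x → x < L p → p < L x ∧ L x < L p := by
    intro p hp x hx h1 h2 h3 h4
    obtain ⟨p1, p2, p3⟩ := hL p hp
    obtain ⟨x1, x2, x3⟩ := hL x hx
    have e1 : L x ≠ p := fun e => h2 (by rw [← e, x2])
    have e2 : L x ≠ L p := fun e => h1 (by rw [← x2, e, p2])
    have n1 : ¬ (L p < L x) := nc p hp x hx h3 h4
    have n2 : ¬ (L x < p) := fun hlt => nc (L x) x1 p hp hlt (by rw [x2]; exact h3)
      (by rw [x2]; exact h4)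
    exact ⟨lt_of_le_of_ne (not_lt.1 n2) e1.symm, lt_of_le_of_ne (not_lt.1 n1) e2⟩
  intro p hp x hx h1 h2 h3
  obtain ⟨p1, p2, p3⟩ := hL p hp
  rcases h3 with ⟨h3, h4⟩ | ⟨h3, h4⟩
  · exact Or.inl (A p hp x hx h1 h2 h3 h4)
  · have := A (L p) p1 x hx h2 (by rw [p2]; exact h1) h3 (by rw [p2]; exact h4)
    rw [p2] at this
    exact Or.inr this

lemma bet_xor {N : ℕ} (i j a b y : Fin N) (hij : i < j)
    (y1 : y ≠ i) (y2 : y ≠ j) (y3 : y ≠ a) (y4 : y ≠ b) 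
    (py : y < i ∨ y = i ∨ y = j ∨ j < y) :
    Bet a b y ↔ ¬ (Bet i a y ↔ Bet j b y) := by
  unfold Bet
  simp only [Fin.lt_def, ne_eq, Fin.ext_iff] at *
  omega

lemma bet_comb {N : ℕ} (i j a b y z : Fin N) (hij : i < j)
    (y1 : y ≠ i) (y2 : y ≠ j) (y3 : y ≠ a) (y4 : y ≠ b)
    (z1 : z ≠ i) (z2 : z ≠ j) (z3 : z ≠ a) (z4 : z ≠ b)
    (py : y < i ∨ y = i ∨ y = j ∨ j < y) (pz : z < i ∨ z = i ∨ z = j ∨ j < z)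
    (q1 : (Bet i a y → Bet i a z) ∧ (Bet i a z → Bet i a y))
    (q2 : (Bet j b y → Bet j b z) ∧ (Bet j b z → Bet j b y)) :
    Bet a b y → Bet a b z := by
  rw [bet_xor i j a b y hij y1 y2 y3 y4 py, bet_xor i j a b z hij z1 z2 z3 z4 pz]
  tauto

lemma no_closed {N : ℕ} (h : Fin N → ℝ) : ∀ (k : ℕ) (S : Finset (Fin N)) (U L : Fin N → Fin N),
    S.card = k → S.Nonempty →
    (∀ x ∈ S, U x ∈ S ∧ U (U x) = x ∧ U x ≠ x) →
    (∀ x ∈ S, L x ∈ S ∧ L (L x) = x ∧ L x ≠ x) →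
    (∀ a ∈ S, ∀ c ∈ S, a < c → c < U a → U a < U c → False) →
    (∀ a ∈ S, ∀ c ∈ S, a < c → c < L a → L a < L c → False) →
    (∀ a ∈ S, a < U a → h a = h (U a) + Real.pi) →
    (∀ a ∈ S, a < L a → h (L a) = h a + Real.pi) → False := by
  intro k
  induction k using Nat.strong_induction_on with
  | _ k ih =>
  intro S U L hk hne hU hL ncU ncL hhU hhL
  have hpi := Real.pi_pos
  -- innermost upper arc
  have hne2 : (S.filter (fun a => a < U a)).Nonempty := by
    obtain ⟨x, hx⟩ := hne
    obtain ⟨h1, h2, h3⟩ := hU x hx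
    rcases lt_or_gt_of_ne h3 with h4 | h4
    · exact ⟨U x, by simp [h1, h2, h4]⟩
    · exact ⟨x, by simp [hx, h4]⟩
  obtain ⟨i, hi, hmin⟩ := Finset.exists_min_image _ (fun a => (U a).val - a.val) hne2
  simp only [Finset.mem_filter, and_imp] at hi hmin
  obtain ⟨hiS, hiU⟩ := hi
  obtain ⟨hjS, hUj, -⟩ := hU i hiS
  have hadj : ∀ c ∈ S, i < c → c < U i → False := by
    intro c hc h1 h2
    obtain ⟨c1, c2, c3⟩ := hU c hc
    have n1 : ¬ (U i < U c) := ncU i hiS c hc h1 h2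
    have n2 : ¬ (U c < i) := fun hlt => ncU (U c) c1 i hiS hlt (by rw [c2]; exact h1)
      (by rw [c2]; exact h2)
    have n3 : U c ≠ i := by rintro rfl; rw [c2] at h2; exact lt_irrefl _ h2
    have n4 : U c ≠ U i := fun e => by
      have := congrArg U e; rw [c2, hUj] at this; exact h1.ne' this
    rcases lt_or_gt_of_ne c3 with h4 | h4
    · have := hmin (U c) c1 (by rw [c2]; exact h4)
      rw [c2] at this
      simp only [Fin.lt_def, ne_eq, Fin.ext_iff] at *
      omega
    · have := hmin c hc h4
      simp only [Fin.lt_def, ne_eq, Fin.ext_iff] at *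
      omega
  have hij := hhU i hiS hiU
  set j := U i with hj
  by_cases hLi : L i = j
  · have := hhL i hiS (by rw [hLi]; exact hiU)
    rw [hLi] at this
    linarith
  obtain ⟨haS, hLa, hai⟩ := hL i hiS
  obtain ⟨hbS, hLb, hbj⟩ := hL j hjS
  have e1 : L i < i → h i = h (L i) + Real.pi := fun hl => by
    have := hhL (L i) haS (by rw [hLa]; exact hl); rwa [hLa] at this
  have e2 : L j < j → h j = h (L j) + Real.pi := fun hl => by
    have := hhL (L j) hbS (by rw [hLb]; exact hl); rwa [hLb] at this
  have e3 := hhL i hiS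
  have e4 := hhL j hjS
  have hbi : L j ≠ i := fun e => hLi (by rw [← e, hLb])
  have hab : L i ≠ L j := fun e => hiU.ne (by rw [← hLa, e, hLb])
  have na : ∀ c ∈ S, c < i ∨ c = i ∨ c = j ∨ j < c := by
    intro c hc
    have := hadj c hc
    by_contra hcon
    push Not at hcon
    exact this (lt_of_le_of_ne hcon.1 (Ne.symm hcon.2.1)) (lt_of_le_of_ne hcon.2.2.2 hcon.2.2.1)
  have key : ∀ x ∈ S, x ≠ i → x ≠ j → x ≠ L i → x ≠ L j →
      L x ≠ i ∧ L x ≠ j ∧ L x ≠ L i ∧ L x ≠ L j := by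
    intro x hx x1 x2 x3 x4
    have := (hL x hx).2.1
    refine ⟨?_, ?_, ?_, ?_⟩ <;> intro e
    · exact x3 (by rw [← e, this])
    · exact x4 (by rw [← e, this])
    · exact x1 (by rw [← this, e, hLa])
    · exact x2 (by rw [← this, e, hLb])
  -- positions
  have ncai := ncL (L i) haS
  have ncbj := ncL (L j) hbS
  have nci := ncL i hiS
  have ncj := ncL j hjS
  rw [hLa] at ncai
  rw [hLb] at ncbj
  have pa := na _ haS
  have pb := na _ hbS
  generalize hA : L i = a at *
  generalize hB : L j = b at *
  let L' : Fin N → Fin N := fun x => if x = a then b else if x = b then a else L x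
  have L'a : L' a = b := by simp [L']
  have L'b : L' b = a := by simp [L', hab.symm]
  have L'x : ∀ x, x ≠ a → x ≠ b → L' x = L x := fun x h1 h2 => by simp [L', h1, h2]
  clear_value L'
  have ncaj : ¬ (a < j ∧ j < i ∧ i < b) := fun t => lt_asymm t.2.1 hiU
  have ncbi : ¬ (b < i ∧ i < j ∧ j < a) := fun t => ncbj i hiS t.1 t.2.1 (by rw [hA]; exact t.2.2)
  have ncij : ¬ (i < j ∧ j < a ∧ a < b) := fun t => nci j hjS t.1 t.2.1 (by rw [hB]; exact t.2.2)
  have ncab : ¬ (a < b ∧ b < i ∧ i < j) := fun t => ncai b hbS t.1 t.2.1 (by rw [hLb]; exact t.2.2)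
  have hmem : ∀ x, x ∈ (S.erase i).erase j ↔ x ≠ j ∧ x ≠ i ∧ x ∈ S := by simp
  have hcard : ((S.erase i).erase j).card < k := by
    rw [← hk]
    exact lt_of_le_of_lt (Finset.card_erase_le) (Finset.card_erase_lt_of_mem hiS)
  refine ih _ hcard ((S.erase i).erase j) U L' rfl ⟨a, ?_⟩ ?_ ?_ ?_ ?_ ?_ ?_
  · rw [hmem]; exact ⟨hLi, hai, haS⟩
  · intro x hx
    rw [hmem] at hx ⊢
    obtain ⟨x1, x2, x3⟩ := hx
    obtain ⟨u1, u2, u3⟩ := hU x x3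
    refine ⟨⟨?_, ?_, u1⟩, u2, u3⟩
    · intro e; apply x2; rw [← u2, e, hUj]
    · intro e; apply x1; rw [← u2, e]
  · intro x hx
    rw [hmem] at hx ⊢
    obtain ⟨x1, x2, x3⟩ := hx
    by_cases xa : x = a
    · subst xa; rw [L'a, L'b]; exact ⟨⟨hbj, hbi, hbS⟩, rfl, hab.symm⟩
    by_cases xb : x = b
    · subst xb; rw [L'b, L'a]; exact ⟨⟨hLi, hai, haS⟩, rfl, hab⟩
    obtain ⟨k1, k2, k3, k4⟩ := key x x3 x2 x1 xa xb
    rw [L'x x xa xb, L'x _ k3 k4]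
    exact ⟨⟨k2, k1, (hL x x3).1⟩, (hL x x3).2⟩
  · intro x hx y hy
    rw [hmem] at hx hy
    exact ncU x hx.2.2 y hy.2.2
  · have main : ∀ y ∈ S, y ≠ i → y ≠ j → y ≠ a → y ≠ b →
        ((a < y ∧ y < b) ∨ (b < y ∧ y < a)) → 
        ((a < L y ∧ L y < b) ∨ (b < L y ∧ L y < a)) := by
      intro y hy y1 y2 y3 y4
      obtain ⟨k1, k2, k3, k4⟩ := key y hy y1 y2 y3 y4
      obtain ⟨l1, l2, l3⟩ := hL y hy
      have py := na y hy
      have ply := na _ l1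
      have q1 := bet_lem S L hL ncL i hiS y hy y1 (by rw [hA]; exact y3)
      have q2 := bet_lem S L hL ncL j hjS y hy y2 (by rw [hB]; exact y4)
      have q3 := bet_lem S L hL ncL i hiS _ l1 k1 (by rw [hA]; exact k3)
      have q4 := bet_lem S L hL ncL j hjS _ l1 k2 (by rw [hB]; exact k4)
      rw [l2, hA] at q3
      rw [l2, hB] at q4
      rw [hA] at q1
      rw [hB] at q2
      exact bet_comb i j a b y (L y) hiU y1 y2 y3 y4 k1 k2 k3 k4 py ply ⟨q1, q3⟩ ⟨q2, q4⟩
    intro x hx y hy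
    rw [hmem] at hx hy
    by_cases xa : x = a
    · subst xa
      rw [L'a]
      intro o1 o2 
      rw [L'x y o1.ne' o2.ne]
      intro o3
      have := main y hy.2.2 hy.2.1 hy.1 o1.ne' o2.ne (Or.inl ⟨o1, o2⟩)
      rcases this with t | t
      · exact lt_asymm o3 t.2
      · exact lt_asymm (o1.trans o2) (t.1.trans t.2)
    by_cases xb : x = b
    · subst xb
      rw [L'b]
      intro o1 o2 
      rw [L'x y o2.ne o1.ne']
      intro o3
      have := main y hy.2.2 hy.2.1 hy.1 o2.ne o1.ne' (Or.inr ⟨o1, o2⟩)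
      rcases this with t | t
      · exact lt_asymm (o1.trans o2) (t.1.trans t.2)
      · exact lt_asymm o3 t.2
    rw [L'x x xa xb]
    obtain ⟨k1, k2, k3, k4⟩ := key x hx.2.2 hx.2.1 hx.1 xa xb
    obtain ⟨l1, l2, l3⟩ := hL x hx.2.2
    have := main _ l1 k1 k2 k3 k4
    rw [l2] at this
    by_cases ya : y = a
    · subst ya
      rw [L'a]
      intro o1 o2 o3
      rcases this (Or.inl ⟨o2, o3⟩) with t | t
      · exact lt_asymm o1 t.1
      · exact lt_asymm (o2.trans o3) (t.1.trans t.2)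
    by_cases yb : y = b
    · subst yb
      rw [L'b]
      intro o1 o2 o3
      rcases this (Or.inr ⟨o2, o3⟩) with t | t
      · exact lt_asymm (o2.trans o3) (t.1.trans t.2)
      · exact lt_asymm o1 t.1
    rw [L'x y ya yb]
    exact ncL x hx.2.2 y hy.2.2
  · intro x hx
    rw [hmem] at hx
    exact hhU x hx.2.2
  · have fin1 : a < b → h b = h a + Real.pi := by
      intro hl
      rcases lt_or_ge a i with c1 | c1
      · have := e1 c1
        have hjb : j < b := by
          clear ih key L'x ncL hhL hhU ncU hU hL hadj na hmin nci ncj ncai ncbj hmem this e1 e2 e3 e4 hij hpi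
          simp only [Fin.lt_def, ne_eq, Fin.ext_iff] at *
          omega
        have := e4 hjb
        linarith
      · exfalso
        clear ih key L'x ncL hhL hhU ncU hU hL hadj na hmin nci ncj ncai ncbj hmem e1 e2 e3 e4 hij hpi
        simp only [Fin.lt_def, Fin.le_def, ne_eq, Fin.ext_iff] at *
        omega
    have fin2 : b < a → h a = h b + Real.pi := by
      intro hl
      have dich : (a < i ∧ b < j) ∨ (i < a ∧ j < b) := by
        clear ih key L'x ncL hhL hhU ncU hU hL hadj na hmin nci ncj ncai ncbj hmem e1 e2 e3 e4 hij hpi fin1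
        simp only [Fin.lt_def, ne_eq, Fin.ext_iff] at *
        omega
      rcases dich with ⟨c1, c2⟩ | ⟨c1, c2⟩
      · have := e1 c1
        have := e2 c2
        linarith
      · have := e3 c1
        have := e4 c2
        linarith
    intro x hx
    rw [hmem] at hx
    by_cases xa : x = a
    · subst xa; rw [L'a]; exact fin1
    by_cases xb : x = b
    · subst xb; rw [L'b]; exact fin2
    rw [L'x x xa xb]
    exact hhL x hx.2.2

section
variable {n : ℕ} {Mp Mm : Fin (n + 1) → Fin (n + 1)}

lemma trav_succ_even {i : ℕ} (hi : i % 2 = 0) :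
    traversal Mp Mm (i + 1) = Mm (traversal Mp Mm i) := by
  simp [traversal, hi]

lemma trav_succ_odd {i : ℕ} (hi : i % 2 = 1) :
    traversal Mp Mm (i + 1) = Mp (traversal Mp Mm i) := by
  simp [traversal, hi]

lemma trav_pred_even (h : IsMatching Mm) {i : ℕ} (hi : i % 2 = 0) :
    Mm (traversal Mp Mm (i + 1)) = traversal Mp Mm i := by
  rw [trav_succ_even hi, h.1]

lemma trav_pred_odd (h : IsMatching Mp) {i : ℕ} (hi : i % 2 = 1) :
    Mp (traversal Mp Mm (i + 1)) = traversal Mp Mm i := by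
  rw [trav_succ_odd hi, h.1]

lemma trav_odd_ne (hp : IsMatching Mp) (hm : IsMatching Mm) (d : ℕ) :
    ∀ i, traversal Mp Mm i ≠ traversal Mp Mm (i + 2 * d + 1) := by
  induction d with
  | zero =>
    intro i e
    rcases Nat.mod_two_eq_zero_or_one i with hi | hi
    · rw [mul_zero, add_zero, trav_succ_even hi] at e; exact hm.2 _ e.symm
    · rw [mul_zero, add_zero, trav_succ_odd hi] at e; exact hp.2 _ e.symm
  | succ d ih =>
    intro i e
    apply ih (i + 1)
    rcases Nat.mod_two_eq_zero_or_one i with hi | hi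
    · rw [trav_succ_even hi, e, trav_pred_even hm (by omega)]; congr 1; ring
    · rw [trav_succ_odd hi, e, trav_pred_odd hp (by omega)]; congr 1; ring

lemma trav_shift (hp : IsMatching Mp) (hm : IsMatching Mm) (d : ℕ) :
    ∀ i, traversal Mp Mm i = traversal Mp Mm (i + 2 * d) → traversal Mp Mm (2 * d) = Fin.last n := by
  intro i
  induction i with
  | zero => intro e; simpa [traversal] using e.symm
  | succ i ih =>
    intro e
    apply ih
    have e' : i + 1 + 2 * d = (i + 2 * d) + 1 := by ring
    rw [e'] at e
    rcases Nat.mod_two_eq_zero_or_one i with hi | hi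
    · rw [trav_succ_even hi, trav_succ_even (by omega)] at e; exact hm.1.injective e
    · rw [trav_succ_odd hi, trav_succ_odd (by omega)] at e; exact hp.1.injective e

lemma trav_inj (hp : IsMatching Mp) (hm : IsMatching Mm) 
    (hne : ∀ i, 1 ≤ i → i ≤ n → traversal Mp Mm i ≠ Fin.last n) {i j : ℕ} (hij : i < j)
    (hj : j ≤ n) : traversal Mp Mm i ≠ traversal Mp Mm j := by
  intro e
  obtain ⟨d, hd⟩ | ⟨d, hd⟩ := Nat.even_or_odd (j - i)
  · exact hne (2 * d) (by omega) (by omega) (trav_shift hp hm d i (by rw [e]; congr 1; omega))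
  · exact trav_odd_ne hp hm d i (by rw [e]; congr 1; omega)

lemma trav_surj (hp : IsMatching Mp) (hm : IsMatching Mm) 
    (hne : ∀ i, 1 ≤ i → i ≤ n → traversal Mp Mm i ≠ Fin.last n) (x : Fin (n + 1)) :
    ∃ i ≤ n, traversal Mp Mm i = x := by
  have : Function.Injective (fun k : Fin (n + 1) => traversal Mp Mm k.val) := by
    intro a b e
    rcases lt_trichotomy a b with h | h | h
    · exact absurd e (trav_inj hp hm hne h (by omega))
    · exact h
    · exact absurd e.symm (trav_inj hp hm hne h (by omega))
  obtain ⟨k, hk⟩ := (Finite.injective_iff_surjective.mp this) x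
  exact ⟨k.val, by omega, hk⟩

/-- `θ` extended by zero. -/
noncomputable def ext0 (θ : Fin n → ℝ) (x : Fin (n + 1)) : ℝ :=
  if h : (x : ℕ) < n then θ ⟨x, h⟩ else 0

lemma wind_iff {θ : Fin n → ℝ} (h : IsWindingFunction Mp Mm θ) :
    ∀ i, 1 ≤ i → i ≤ n → traversal Mp Mm i ≠ Fin.last n ∧
      ext0 θ (traversal Mp Mm i) = windingValue Mp Mm i := by
  intro i h1 h2
  obtain ⟨h3, h4⟩ := h i h1 h2
  refine ⟨fun e => by rw [e] at h3; simp at h3, ?_⟩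
  rw [ext0, dif_pos h3, h4]

lemma wind_rel {θ : Fin n → ℝ} (hodd : n % 2 = 1) (hp : IsMatching Mp) (hm : IsMatching Mm)
    (h : IsWindingFunction Mp Mm θ) :
    (∀ x, x ≠ Fin.last n → Mp x ≠ Fin.last n → x < Mp x → ext0 θ x = ext0 θ (Mp x) + Real.pi) ∧
    (∀ x, x ≠ Fin.last n → Mm x ≠ Fin.last n → x < Mm x → ext0 θ (Mm x) = ext0 θ x + Real.pi) := by
  have hw := wind_iff h
  have hne := fun i h1 h2 => (hw i h1 h2).1
  have step : ∀ i, 1 ≤ i → i < n → ext0 θ (traversal Mp Mm (i + 1)) =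
      ext0 θ (traversal Mp Mm i) + windingStep Mp Mm i := by
    intro i h1 h2
    rw [(hw i h1 h2.le).2, (hw (i+1) (by omega) h2).2]
    obtain ⟨k, rfl⟩ : ∃ k, i = k + 1 := ⟨i - 1, by omega⟩
    rfl
  constructor
  · intro x hx hMx hlt
    obtain ⟨i, hin, rfl⟩ := trav_surj hp hm hne x
    have hi0 : i ≠ 0 := by rintro rfl; exact hx rfl
    rcases Nat.mod_two_eq_zero_or_one i with hi | hi
    · obtain ⟨k, rfl⟩ : ∃ k, i = k + 1 := ⟨i - 1, by omega⟩
      have hk : k % 2 = 1 := by omega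
      rw [trav_pred_odd hp hk] at *
      rw [step k (by omega) (by omega), windingStep, if_pos]
      exact Or.inr ⟨by omega, hlt⟩
    · rw [← trav_succ_odd (Mp := Mp) (Mm := Mm) hi] at hMx hlt ⊢
      have hin' : i ≠ n := by
        rintro rfl
        obtain ⟨k, hki, hk⟩ := trav_surj hp hm hne (traversal Mp Mm (i + 1))
        have hk0 : k ≠ 0 := by rintro rfl; exact hMx hk.symm
        have hM := congrArg Mp hk
        rw [trav_pred_odd hp hi] at hM
        rcases Nat.mod_two_eq_zero_or_one k with hk' | hk'
        · obtain ⟨l, rfl⟩ : ∃ l, k = l + 1 := ⟨k - 1, by omega⟩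
          rw [trav_pred_odd hp (by omega)] at hM
          exact trav_inj hp hm hne (by omega) le_rfl hM
        · rw [← trav_succ_odd (Mp := Mp) (Mm := Mm) hk'] at hM
          rcases eq_or_lt_of_le hki with rfl | hlt'
          · rw [hM] at hlt; exact lt_irrefl _ hlt
          · exact trav_inj hp hm hne (by omega) le_rfl hM
      rw [step i (by omega) (by omega), windingStep, if_neg]
      · ring
      · simp [hi, hlt.le]
  · intro x hx hMx hlt
    obtain ⟨i, hin, rfl⟩ := trav_surj hp hm hne x
    have hi0 : i ≠ 0 := by rintro rfl; exact hx rfl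
    rcases Nat.mod_two_eq_zero_or_one i with hi | hi
    · rw [← trav_succ_even (Mp := Mp) (Mm := Mm) hi] at hMx hlt ⊢
      rw [step i (by omega) (by omega), windingStep, if_pos]
      exact Or.inl ⟨hi, hlt⟩
    · obtain ⟨k, rfl⟩ : ∃ k, i = k + 1 := ⟨i - 1, by omega⟩
      have hk : k % 2 = 0 := by omega
      rw [trav_pred_even hm hk] at *
      have hk0 : k ≠ 0 := by rintro rfl; exact hMx rfl
      rw [step k (by omega) (by omega), windingStep, if_neg]
      · ring
      · simp [hk, hlt.le]

lemma adj_p (hp : IsMatching Mp) (x) : (meanderGraph Mp Mm).Adj x (Mp x) := by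
  simp [meanderGraph, SimpleGraph.fromRel_adj, (hp.2 x).symm]

lemma adj_m (hm : IsMatching Mm) (x) : (meanderGraph Mp Mm).Adj x (Mm x) := by
  simp [meanderGraph, SimpleGraph.fromRel_adj, (hm.2 x).symm]

lemma conn_of_rel {θ : Fin n → ℝ} (hp : IsMatching Mp) (hm : IsMatching Mm)
    (np : Noncrossing Mp) (nm : Noncrossing Mm)
    (r1 : ∀ x, x ≠ Fin.last n → Mp x ≠ Fin.last n → x < Mp x → ext0 θ x = ext0 θ (Mp x) + Real.pi)
    (r2 : ∀ x, x ≠ Fin.last n → Mm x ≠ Fin.last n → x < Mm x → ext0 θ (Mm x) = ext0 θ x + Real.pi) :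
    (meanderGraph Mp Mm).Connected := by
  classical
  have key : ∀ x, (meanderGraph Mp Mm).Reachable (Fin.last n) x := by
    by_contra! hcon
    obtain ⟨y, hy⟩ := hcon
    let S : Finset (Fin (n+1)) := 
      Finset.univ.filter (fun x => ¬ (meanderGraph Mp Mm).Reachable (Fin.last n) x)
    have hS : ∀ x, x ∈ S ↔ ¬ (meanderGraph Mp Mm).Reachable (Fin.last n) x := by simp [S]
    have hl : ∀ x ∈ S, x ≠ Fin.last n := by
      rintro x hx rfl; exact (hS _).1 hx (SimpleGraph.Reachable.refl _)
    have cp : ∀ x ∈ S, Mp x ∈ S := fun x hx => (hS _).2 fun hr =>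
      (hS _).1 hx (hr.trans (adj_p hp x).symm.reachable)
    have cm : ∀ x ∈ S, Mm x ∈ S := fun x hx => (hS _).2 fun hr =>
      (hS _).1 hx (hr.trans (adj_m hm x).symm.reachable)
    refine no_closed (ext0 θ) _ S Mp Mm rfl ⟨y, (hS y).2 hy⟩ 
      (fun x hx => ⟨cp x hx, hp.1 x, hp.2 x⟩) (fun x hx => ⟨cm x hx, hm.1 x, hm.2 x⟩)
      (fun a _ c _ h1 h2 h3 => np ⟨a, c, h1, h2, h3⟩)
      (fun a _ c _ h1 h2 h3 => nm ⟨a, c, h1, h2, h3⟩)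
      (fun a ha => r1 a (hl a ha) (hl _ (cp a ha))) (fun a ha => r2 a (hl a ha) (hl _ (cm a ha)))
  exact SimpleGraph.Connected.mk (fun x y => (key x).symm.trans (key y))

lemma closed_univ (hc : (meanderGraph Mp Mm).Connected) (hp : IsMatching Mp) (hm : IsMatching Mm)
    (S : Set (Fin (n + 1))) (hl : Fin.last n ∈ S) (cp : ∀ x ∈ S, Mp x ∈ S)
    (cm : ∀ x ∈ S, Mm x ∈ S) (x) : x ∈ S := by
  obtain ⟨w⟩ := hc.preconnected (Fin.last n) x
  generalize Fin.last n = y at *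
  induction w with
  | nil => exact hl
  | cons hadj w ih =>
    apply ih
    simp only [meanderGraph, SimpleGraph.fromRel_adj] at hadj
    rcases hadj with ⟨-, (h | h) | (h | h)⟩
    · rw [← h]; exact cp _ hl
    · rw [← h]; exact cm _ hl
    · have := cp _ hl; rw [← h, hp.1] at this; exact this
    · have := cm _ hl; rw [← h, hm.1] at this; exact this

lemma trav_ne_last (hc : (meanderGraph Mp Mm).Connected) (hp : IsMatching Mp) (hm : IsMatching Mm) :
    ∀ i, 1 ≤ i → i ≤ n → traversal Mp Mm i ≠ Fin.last n := by
  classical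
  intro k h1 h2 e
  have e0 : traversal Mp Mm 0 = Fin.last n := rfl
  have hev : k % 2 = 0 := by
    by_contra hk
    exact trav_odd_ne hp hm (k / 2) 0 (by rw [e0, ← e]; congr 1; omega)
  have hall := closed_univ hc hp hm {x | ∃ i < k, traversal Mp Mm i = x} ⟨0, by omega, rfl⟩
    (by
      rintro x ⟨i, hi, rfl⟩
      rcases Nat.mod_two_eq_zero_or_one i with hi' | hi'
      · rcases Nat.eq_zero_or_pos i with rfl | hpos
        · refine ⟨k - 1, by omega, ?_⟩
          have : k = (k - 1) + 1 := by omega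
          rw [e0, ← e, this, trav_pred_odd hp (by omega)]; rfl
        · refine ⟨i - 1, by omega, ?_⟩
          have : i = (i - 1) + 1 := by omega
          rw [this, trav_pred_odd hp (by omega)]; rfl
      · rw [← trav_succ_odd (Mp := Mp) (Mm := Mm) hi']
        rcases Nat.lt_or_ge (i + 1) k with hl | hl
        · exact ⟨i + 1, hl, rfl⟩
        · refine ⟨0, by omega, ?_⟩
          rw [e0, ← e]; congr 1; omega)
    (by
      rintro x ⟨i, hi, rfl⟩
      rcases Nat.mod_two_eq_zero_or_one i with hi' | hi'
      · exact ⟨i + 1, by omega, trav_succ_even hi'⟩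
      · refine ⟨i - 1, by omega, ?_⟩
        have : i = (i - 1) + 1 := by omega
        rw [this, trav_pred_even hm (by omega)]; rfl)
  have hsub : (Finset.univ : Finset (Fin (n+1))) ⊆ (Finset.range k).image (traversal Mp Mm) := by
    intro x _
    obtain ⟨i, hi, hx⟩ := hall x
    exact Finset.mem_image.2 ⟨i, Finset.mem_range.2 hi, hx⟩
  have h3 := Finset.card_le_card hsub
  have h4 := Finset.card_image_le (s := Finset.range k) (f := traversal Mp Mm)
  simp at h3 h4
  omega

lemma wind_of_rel {θ : Fin n → ℝ} (hp : IsMatching Mp) (hm : IsMatching Mm)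
    (hc : (meanderGraph Mp Mm).Connected)
    (r0 : ext0 θ (Mm (Fin.last n)) = 0)
    (r1 : ∀ x, x ≠ Fin.last n → Mp x ≠ Fin.last n → x < Mp x → ext0 θ x = ext0 θ (Mp x) + Real.pi)
    (r2 : ∀ x, x ≠ Fin.last n → Mm x ≠ Fin.last n → x < Mm x → ext0 θ (Mm x) = ext0 θ x + Real.pi) :
    IsWindingFunction Mp Mm θ := by
  have hne := trav_ne_last hc hp hm
  have main : ∀ k, k + 1 ≤ n → ext0 θ (traversal Mp Mm (k + 1)) = windingValue Mp Mm (k + 1) := by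
    intro k
    induction k with
    | zero => intro _; exact r0
    | succ k ih =>
      intro hk
      have ih' := ih (by omega)
      have hs : windingValue Mp Mm (k + 1 + 1) = 
        windingValue Mp Mm (k + 1) + windingStep Mp Mm (k + 1) := rfl
      rw [hs, ← ih']
      have ha := hne (k + 1) (by omega) (by omega)
      have hb := hne (k + 1 + 1) (by omega) (by omega)
      rcases Nat.mod_two_eq_zero_or_one (k + 1) with hi | hi
      · have p := @trav_pred_even n Mp Mm hm _ hi
        have q := @trav_succ_even n Mp Mm _ hi
        have s1 := r2 _ ha (by rw [← q]; exact hb)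
        have s2 := r2 _ hb (by rw [p]; exact ha)
        rw [← q] at s1
        rw [p] at s2
        rcases lt_trichotomy (traversal Mp Mm (k + 1)) (traversal Mp Mm (k + 1 + 1)) with o | o | o
        · rw [windingStep, if_pos (Or.inl ⟨hi, o⟩)]; exact s1 o
        · exact absurd (q.symm.trans o.symm) (hm.2 _)
        · rw [windingStep, if_neg (by simp [hi, o.le])]; linarith [s2 o]
      · have p := @trav_pred_odd n Mp Mm hp _ hi
        have q := @trav_succ_odd n Mp Mm _ hi
        have s1 := r1 _ ha (by rw [← q]; exact hb)
        have s2 := r1 _ hb (by rw [p]; exact ha)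
        rw [← q] at s1
        rw [p] at s2
        rcases lt_trichotomy (traversal Mp Mm (k + 1)) (traversal Mp Mm (k + 1 + 1)) with o | o | o
        · rw [windingStep, if_neg (by simp [hi, o.le])]; linarith [s1 o]
        · exact absurd (q.symm.trans o.symm) (hp.2 _)
        · rw [windingStep, if_pos (Or.inr ⟨by omega, o⟩)]; exact s2 o
  intro i h1 h2
  have h3 : (traversal Mp Mm i : ℕ) < n := by
    have := hne i h1 h2
    simp only [ne_eq, Fin.ext_iff, Fin.val_last] at this
    omega
  refine ⟨h3, ?_⟩
  obtain ⟨k, rfl⟩ : ∃ k, i = k + 1 := ⟨i - 1, by omega⟩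
  have := main k h2
  rwa [ext0, dif_pos h3] at this

lemma combine {θ : Fin n → ℝ} {Np Nm : Fin (n + 1) → Fin (n + 1)} (hodd : n % 2 = 1)
    (h1 : IsMeander Mp Nm ∧ IsWindingFunction Mp Nm θ)
    (h2 : IsMeander Np Mm ∧ IsWindingFunction Np Mm θ) :
    IsMeander Mp Mm ∧ IsWindingFunction Mp Mm θ := by
  obtain ⟨⟨a1, a2, a3, a4, a5⟩, a6⟩ := h1
  obtain ⟨⟨b1, b2, b3, b4, b5⟩, b6⟩ := h2
  have r1 := (wind_rel hodd a1 a3 a6).1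
  have r2 := (wind_rel hodd b1 b3 b6).2
  have hc := conn_of_rel a1 b3 a2 b4 r1 r2
  exact ⟨⟨a1, a2, b3, b4, hc⟩, wind_of_rel a1 b3 hc (wind_iff b6 1 le_rfl (by omega)).2 r1 r2⟩

end

end Meander

open Meander in
/-- **Product structure of meanders with a given winding function.** If
`(M⁺, N⁻)` and `(N⁺, M⁻)` are meanders of size `m` with the same winding function
`θ₀`, then so is `(M⁺, M⁻)`.  Consequently, the set of meanders of size `m` with
winding function `θ₀` is the product set `S⁺ × S⁻`, where `S⁺` (resp. `S⁻`) is the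
set of upper (resp. lower) matchings occurring in some such meander. -/
theorem meanders_with_winding_product_structure
    (m n : ℕ) (hm : 1 ≤ m) (hn : n = 2 * m - 1)
    (θ₀ : Fin n → ℝ)
    (Mp Mm Np Nm : Fin (n + 1) → Fin (n + 1))
    (h1 : IsMeander Mp Nm ∧ IsWindingFunction Mp Nm θ₀)
    (h2 : IsMeander Np Mm ∧ IsWindingFunction Np Mm θ₀) :
    (IsMeander Mp Mm ∧ IsWindingFunction Mp Mm θ₀) ∧
    {p : (Fin (n + 1) → Fin (n + 1)) × (Fin (n + 1) → Fin (n + 1)) |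
        IsMeander p.1 p.2 ∧ IsWindingFunction p.1 p.2 θ₀} =
      {A : Fin (n + 1) → Fin (n + 1) |
          ∃ B, IsMeander A B ∧ IsWindingFunction A B θ₀} ×ˢ
        {B : Fin (n + 1) → Fin (n + 1) |
          ∃ A, IsMeander A B ∧ IsWindingFunction A B θ₀} := by
  have hodd : n % 2 = 1 := by omega
  refine ⟨combine hodd h1 h2, ?_⟩
  ext ⟨A, B⟩
  simp only [Set.mem_ofPred_eq, Set.mem_prod]
  constructor
  · intro h
    exact ⟨⟨B, h⟩, ⟨A, h⟩⟩
  · rintro ⟨⟨B', h⟩, ⟨A', h'⟩⟩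
    exact combine hodd h h'
end
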